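/- Let 0 < γ < 1 and let ν be a nonzero σ-finite measure on 𝒮↓ with ∫(1−s₁)ν(ds) < ∞ and ν({(1,0,0,…)}) = 0. Let (pₙ)ₙ≥₁ be a sequence of probability measures on 𝒫ₙ with p₁((1)) = 1, and for n ≥ 2 define the probability qₙ on 𝒫ₙ by qₙ(λ) = p_{n−1}(λ') whenever λ ∈ 𝒫ₙ is obtained from some λ' ∈ 𝒫_{n−1} by appending one part equal to 1 and reordering decreasingly, and qₙ(λ) = 0 for partitions λ of n having no part equal to 1. Then (qₙ) satisfies Hypothesis (H) with parameters (γ,ν) if and only if (pₙ) does. -/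

import Mathlib

open MeasureTheory Filter Real Set

/-- The space `𝒮↓` of nonincreasing nonnegative sequences summing to `1`.
(On this set, the topology of the uniform distance `d(s,s') = supᵢ|sᵢ−s'ᵢ|` coincides with
the product (pointwise) topology inherited from `ℕ → ℝ`, since `sᵢ ≤ 1/(i+1)` uniformly.) -/
def Sdown : Set (ℕ → ℝ) :=
  {s | (∀ i, 0 ≤ s i) ∧ (∀ i j, i ≤ j → s j ≤ s i) ∧ HasSum s 1}

/-- The sequence `(1,0,0,…)`. -/
def oneSeq : ℕ → ℝ := fun i => if i = 0 then 1 else 0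

lemma oneSeq_mem_Sdown : oneSeq ∈ Sdown := by
  refine ⟨fun i => ?_, fun i j hij => ?_, ?_⟩
  · unfold oneSeq; split <;> norm_num
  · unfold oneSeq
    rcases Nat.eq_zero_or_pos j with hj | hj
    · have hi : i = 0 := by omega
      simp [hi, hj]
    · have hj' : j ≠ 0 := by omega
      simp only [hj', if_false]
      split <;> norm_num
  · exact hasSum_ite_eq 0 1

-- Interpret a sequence as an element of `𝒮↓` (junk value `(1,0,0,…)` if it is not in `𝒮↓`).
open Classical in
noncomputable def toSdown (s : ℕ → ℝ) : ↥Sdown :=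
  if h : s ∈ Sdown then ⟨s, h⟩ else ⟨oneSeq, oneSeq_mem_Sdown⟩

/-- `partVec n λ` is the element `λ/n = (λ₁/n, …, λ_p/n, 0, 0, …)` of `𝒮↓`: the parts of the
partition `λ` of `n`, in decreasing order, padded with zeros and divided by `n`. -/
noncomputable def partVec (n : ℕ) (lam : Nat.Partition n) : ℕ → ℝ :=
  fun i => (((lam.parts.sort (· ≤ ·)).reverse.getD i 0 : ℕ) : ℝ) / n

/-- Hypothesis (H) of Haas–Miermont for a sequence of splitting probabilities `(qₙ)`, with
parameters `γ > 0` and `ν` a nonzero σ-finite measure on `𝒮↓` with `∫(1−s₁)ν(ds) < ∞` and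
`ν({(1,0,…)}) = 0`: for every bounded continuous `f : 𝒮↓ → ℝ`,
`n^γ Σ_{λ∈𝒫ₙ} qₙ(λ)(1−λ₁/n) f(λ/n) → ∫_{𝒮↓} (1−s₁) f(s) ν(ds)`. -/
def HypH (q : ∀ n, Nat.Partition n → ℝ) (γ : ℝ) (ν : Measure ↥Sdown) : Prop :=
  ∀ f : ↥Sdown → ℝ, Continuous f → (∃ C, ∀ s, |f s| ≤ C) →
    Tendsto (fun n : ℕ => (n : ℝ) ^ γ * ∑ lam : Nat.Partition n,
        q n lam * (1 - partVec n lam 0) * f (toSdown (partVec n lam)))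
      atTop (nhds (∫ s, (1 - s.1 0) * f s ∂ν))

/-- Append a part equal to `1` to a partition of `n`, giving a partition of `n+1`. -/
def addOne {n : ℕ} (lam : Nat.Partition n) : Nat.Partition (n + 1) where
  parts := 1 ::ₘ lam.parts
  parts_pos := by
    intro i hi
    rcases Multiset.mem_cons.1 hi with h | h
    · omega
    · exact lam.parts_pos h
  parts_sum := by
    rw [Multiset.sum_cons, lam.parts_sum]
    omega

/-- Remove a part equal to `1` from a partition of `n+1`, giving a partition of `n`. -/
def eraseOne {n : ℕ} (mu : Nat.Partition (n + 1)) (h : 1 ∈ mu.parts) : Nat.Partition n where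
  parts := mu.parts.erase 1
  parts_pos := fun hi => mu.parts_pos (Multiset.mem_of_mem_erase hi)
  parts_sum := by
    have h1 : (1 ::ₘ mu.parts.erase 1).sum = mu.parts.sum := by
      rw [Multiset.cons_erase h]
    rw [Multiset.sum_cons, mu.parts_sum] at h1
    omega


section abstr
variable {X : Type*} [PseudoMetricSpace X]

noncomputable def infc (f : X → ℝ) (k : ℕ) (x : X) : ℝ := ⨅ y, (f y + k * dist x y)

lemma infc_bdd {f : X → ℝ} {C : ℝ} (hC : ∀ x, |f x| ≤ C) (k : ℕ) (x : X) :
    BddBelow (Set.range fun y => f y + k * dist x y) := by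
  refine ⟨-C, ?_⟩
  rintro _ ⟨y, rfl⟩
  have := abs_le.1 (hC y)
  have : 0 ≤ (k:ℝ) * dist x y := by positivity
  simp only
  linarith

lemma infc_le {f : X → ℝ} {C : ℝ} (hC : ∀ x, |f x| ≤ C) (k : ℕ) (x : X) : infc f k x ≤ f x := by
  have := ciInf_le (infc_bdd hC k x) x
  simp only [dist_self, mul_zero, add_zero] at this
  exact this

lemma infc_ge {f : X → ℝ} {C : ℝ} (hC : ∀ x, |f x| ≤ C) (k : ℕ) (x : X) : -C ≤ infc f k x := by
  have : Nonempty X := ⟨x⟩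
  refine le_ciInf fun y => ?_
  have := abs_le.1 (hC y)
  have : 0 ≤ (k:ℝ) * dist x y := by positivity
  linarith

lemma infc_abs {f : X → ℝ} {C : ℝ} (hC : ∀ x, |f x| ≤ C) (k : ℕ) (x : X) : |infc f k x| ≤ C :=
  abs_le.2 ⟨infc_ge hC k x, (infc_le hC k x).trans (abs_le.1 (hC x)).2⟩

lemma infc_lip {f : X → ℝ} {C : ℝ} (hC : ∀ x, |f x| ≤ C) (k : ℕ) :
    LipschitzWith k (infc f k) := by
  refine LipschitzWith.of_le_add_mul _ fun x y => ?_
  have : Nonempty X := ⟨x⟩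
  rw [← sub_le_iff_le_add]
  refine le_ciInf fun z => ?_
  have h := ciInf_le (infc_bdd hC k x) z
  have h2 : (k:ℝ) * dist x z ≤ k * (dist x y + dist y z) := by
    gcongr; exact dist_triangle _ _ _
  change infc f k x ≤ _ at h
  simp only [NNReal.coe_natCast]
  linarith

lemma infc_tendsto {f : X → ℝ} {C : ℝ} (hf : Continuous f) (hC : ∀ x, |f x| ≤ C) (x : X) :
    Tendsto (fun k => infc f k x) atTop (nhds (f x)) := by
  have : Nonempty X := ⟨x⟩
  rw [Metric.tendsto_atTop]
  intro ε hε
  obtain ⟨δ, hδ, h⟩ := Metric.continuous_iff.1 hf x (ε/2) (by positivity)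
  obtain ⟨N, hN⟩ := exists_nat_ge (2 * C / δ)
  refine ⟨N, fun k hk => ?_⟩
  have h1 := infc_le hC k x
  have h2 : f x - ε/2 ≤ infc f k x := by
    refine le_ciInf fun y => ?_
    have hy := abs_le.1 (hC y)
    have hx := abs_le.1 (hC x)
    by_cases hd : dist y x < δ
    · have := h y hd
      rw [Real.dist_eq, abs_lt] at this
      have : 0 ≤ (k:ℝ) * dist x y := by positivity
      linarith
    · push Not at hd
      rw [dist_comm] at hd
      have hk' : (2 * C / δ) ≤ (k:ℝ) := hN.trans (by exact_mod_cast hk)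
      rw [div_le_iff₀ hδ] at hk'
      have : (k:ℝ) * δ ≤ k * dist x y := by gcongr
      linarith
  rw [Real.dist_eq, abs_lt]
  constructor <;> linarith

variable [MeasurableSpace X] [OpensMeasurableSpace X]

lemma slutsky_half (ν : Measure X) (w : X → ℝ) (hw : Integrable w ν) 
    {ι : ℕ → Type*} [∀ n, Fintype (ι n)] (a : ∀ n, ι n → ℝ) (ha : ∀ n i, 0 ≤ a n i)
    (x y : ∀ n, ι n → X) (ε : ℕ → ℝ) (hε : Tendsto ε atTop (nhds 0))
    (hd : ∀ n, 1 ≤ n → ∀ i, dist (x n i) (y n i) ≤ ε n)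
    (H : ∀ f : X → ℝ, Continuous f → (∃ C, ∀ s, |f s| ≤ C) →
      Tendsto (fun n => ∑ i, a n i * f (x n i)) atTop (nhds (∫ s, w s * f s ∂ν)))
    (f : X → ℝ) (hf : Continuous f) (C : ℝ) (hC : ∀ s, |f s| ≤ C) (b : ℝ)
    (hb : b < ∫ s, w s * f s ∂ν) : ∀ᶠ n in atTop, b < ∑ i, a n i * f (y n i) := by
  have hL : Tendsto (fun k => ∫ s, w s * infc f k s ∂ν) atTop (nhds (∫ s, w s * f s ∂ν)) := by
    refine tendsto_integral_of_dominated_convergence (fun s => ‖w s‖ * C) ?_ (hw.norm.mul_const C) ?_ ?_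
    · intro k
      exact hw.aestronglyMeasurable.mul
        (infc_lip hC k).continuous.measurable.aestronglyMeasurable
    · intro k
      refine Eventually.of_forall fun s => ?_
      rw [norm_mul]
      gcongr
      exact infc_abs hC k s
    · exact Eventually.of_forall fun s => (infc_tendsto hf hC s).const_mul _
  obtain ⟨k, hk⟩ := (hL.eventually (lt_mem_nhds hb)).exists
  have h1 := H (fun _ => 1) continuous_const ⟨1, by simp⟩
  have hA := H (infc f k) (infc_lip hC k).continuous ⟨C, infc_abs hC k⟩
  have hlow := hA.sub ((hε.const_mul (k:ℝ)).mul h1)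
  simp only [mul_zero, zero_mul, sub_zero] at hlow
  filter_upwards [hlow.eventually (lt_mem_nhds hk), eventually_ge_atTop 1] with n hn hn1
  refine hn.trans_le ?_
  rw [Finset.mul_sum, ← Finset.sum_sub_distrib]
  refine Finset.sum_le_sum fun i _ => ?_
  have h3 : infc f k (x n i) ≤ infc f k (y n i) + k * ε n := by
    have := (infc_lip hC k).le_add_mul (x n i) (y n i)
    simp only [NNReal.coe_natCast] at this
    refine this.trans ?_
    gcongr
    exact hd n hn1 i
  have h4 := infc_le hC k (y n i)
  have := mul_le_mul_of_nonneg_left (h3.trans (add_le_add_left h4 _)) (ha n i)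
  linarith

lemma slutsky (ν : Measure X) (w : X → ℝ) (hw : Integrable w ν) 
    {ι : ℕ → Type*} [∀ n, Fintype (ι n)] (a : ∀ n, ι n → ℝ) (ha : ∀ n i, 0 ≤ a n i)
    (x y : ∀ n, ι n → X) (ε : ℕ → ℝ) (hε : Tendsto ε atTop (nhds 0))
    (hd : ∀ n, 1 ≤ n → ∀ i, dist (x n i) (y n i) ≤ ε n)
    (H : ∀ f : X → ℝ, Continuous f → (∃ C, ∀ s, |f s| ≤ C) →
      Tendsto (fun n => ∑ i, a n i * f (x n i)) atTop (nhds (∫ s, w s * f s ∂ν)))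
    (f : X → ℝ) (hf : Continuous f) (hC : ∃ C, ∀ s, |f s| ≤ C) :
    Tendsto (fun n => ∑ i, a n i * f (y n i)) atTop (nhds (∫ s, w s * f s ∂ν)) := by
  obtain ⟨C, hC⟩ := hC
  rw [tendsto_order]
  refine ⟨fun b hb => slutsky_half ν w hw a ha x y ε hε hd H f hf C hC b hb, fun b hb => ?_⟩
  have := slutsky_half ν w hw a ha x y ε hε hd H (fun s => - f s) hf.neg C (by simpa using hC) (-b)
    (by simp only [mul_neg, integral_neg]; linarith)
  filter_upwards [this] with n hn
  simp only [mul_neg, Finset.sum_neg_distrib] at hn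
  linarith
end abstr

lemma sum_range_getD (l : List ℕ) : ∑ i ∈ Finset.range l.length, l.getD i 0 = l.sum := by
  induction l with
  | nil => simp
  | cons a l ih => rw [List.length_cons, Finset.sum_range_succ']; simp at ih; simp [ih, add_comm]

lemma partVec_nonneg (n : ℕ) (lam : Nat.Partition n) (i : ℕ) : 0 ≤ partVec n lam i := by
  unfold partVec; positivity

lemma getD_le (n : ℕ) (lam : Nat.Partition n) (i : ℕ) :
    (lam.parts.sort (· ≤ ·)).reverse.getD i 0 ≤ n := by
  by_cases h : i < (lam.parts.sort (· ≤ ·)).reverse.length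
  · rw [List.getD_eq_getElem _ _ h]
    have hm := List.getElem_mem h
    rw [List.mem_reverse, Multiset.mem_sort] at hm
    have := Multiset.single_le_sum (fun _ _ => Nat.zero_le _) _ hm
    rwa [lam.parts_sum] at this
  · rw [List.getD_eq_default _ _ (by omega)]
    omega

lemma partVec_le_one (n : ℕ) (lam : Nat.Partition n) (i : ℕ) : partVec n lam i ≤ 1 := by
  unfold partVec
  apply div_le_one_of_le₀ _ (by positivity)
  exact_mod_cast getD_le n lam i

lemma partVec_mem {n : ℕ} (hn : 1 ≤ n) (lam : Nat.Partition n) : partVec n lam ∈ Sdown := by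
  refine ⟨partVec_nonneg n lam, fun i j hij => ?_, ?_⟩
  · unfold partVec
    gcongr ?_ / _
    norm_cast
    by_cases h : j < (lam.parts.sort (· ≤ ·)).reverse.length
    · rw [List.getD_eq_getElem _ _ h, List.getD_eq_getElem _ _ (hij.trans_lt h)]
      have hp : (lam.parts.sort (· ≤ ·)).reverse.Pairwise (fun a b => b ≤ a) :=
        List.pairwise_reverse.2 (Multiset.pairwise_sort _ _)
      rcases hij.eq_or_lt with rfl | hlt
      · exact le_rfl
      · exact List.pairwise_iff_getElem.1 hp i j _ _ hlt
    · rw [List.getD_eq_default _ _ (by omega)]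
      omega
  · have h1 : (1:ℝ) = ∑ i ∈ Finset.range (lam.parts.sort (· ≤ ·)).reverse.length,
        partVec n lam i := by
      unfold partVec
      rw [← Finset.sum_div, ← Nat.cast_sum, sum_range_getD, List.sum_reverse,
        ← Multiset.sum_coe, Multiset.sort_eq, lam.parts_sum, div_self]
      positivity
    rw [h1]
    apply hasSum_sum_of_ne_finset_zero
    intro i hi
    unfold partVec
    rw [List.getD_eq_default _ _ (by simpa using hi)]
    simp

lemma toSdown_val {n : ℕ} (hn : 1 ≤ n) (lam : Nat.Partition n) :
    (toSdown (partVec n lam)).1 = partVec n lam := by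
  unfold toSdown
  rw [dif_pos (partVec_mem hn lam)]

lemma addOne_sort {n : ℕ} (lam : Nat.Partition n) :
    ((addOne lam).parts.sort (· ≤ ·)).reverse = (lam.parts.sort (· ≤ ·)).reverse ++ [1] := by
  unfold addOne
  simp only
  rw [Multiset.sort_cons]
  · simp
  · intro b hb
    exact lam.parts_pos hb

lemma addOne_zero {n : ℕ} (hn : 1 ≤ n) (lam : Nat.Partition n) :
    partVec (n+1) (addOne lam) 0 = partVec n lam 0 * (n / (n+1)) := by
  unfold partVec
  rw [addOne_sort, List.getD_append]
  · push_cast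
    have : (n:ℝ) ≠ 0 := by positivity
    field_simp
  · rw [List.length_reverse, Multiset.length_sort, Multiset.card_pos]
    intro h
    have := lam.parts_sum
    rw [h] at this
    simp at this
    omega

lemma addOne_close {n : ℕ} (hn : 1 ≤ n) (lam : Nat.Partition n) (i : ℕ) :
    |partVec n lam i - partVec (n+1) (addOne lam) i| ≤ 1 / ((n:ℝ)+1) := by
  have hn0 : (0:ℝ) < n := by positivity
  have hg := getD_le n lam i
  unfold partVec
  rw [addOne_sort]
  by_cases h : i < (lam.parts.sort (· ≤ ·)).reverse.length
  · rw [List.getD_append _ _ _ _ h]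
    generalize (lam.parts.sort (· ≤ ·)).reverse.getD i 0 = a at *
    have ha : (a:ℝ) ≤ n := by exact_mod_cast hg
    have e : (a:ℝ)/n - a/((n+1:ℕ):ℝ) = (a/n) * (1/((n:ℝ)+1)) := by
      push_cast
      field_simp
      ring
    rw [e, abs_of_nonneg (by positivity)]
    exact mul_le_of_le_one_left (by positivity) (div_le_one_of_le₀ ha hn0.le)
  · rw [List.getD_eq_default _ _ (by omega), List.getD_append_right _ _ _ _ (by omega)]
    have : ∀ j, (([1] : List ℕ).getD j 0) ≤ 1 := by
      intro j; cases j <;> simp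
    have := this (i - (lam.parts.sort (· ≤ ·)).reverse.length)
    generalize ([1] : List ℕ).getD _ 0 = b at *
    have hb : (b:ℝ) ≤ 1 := by exact_mod_cast this
    rw [Nat.cast_zero, zero_div, zero_sub, abs_neg, abs_of_nonneg (by positivity)]
    push_cast
    gcongr

lemma sum_q {n : ℕ} (pn : Nat.Partition n → ℝ) (g : Nat.Partition (n+1) → ℝ) :
    ∑ mu : Nat.Partition (n+1), (if h : 1 ∈ mu.parts then pn (eraseOne mu h) else 0) * g mu
      = ∑ lam : Nat.Partition n, pn lam * g (addOne lam) := by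
  symm
  have hmem : ∀ lam : Nat.Partition n, 1 ∈ (addOne lam).parts := fun lam => by simp [addOne]
  have her : ∀ lam : Nat.Partition n, eraseOne (addOne lam) (hmem lam) = lam := fun lam => by
    ext1; simp [addOne, eraseOne]
  refine Finset.sum_of_injOn addOne ?_ ?_ ?_ ?_
  · intro a _ b _ hab
    have := congrArg Nat.Partition.parts hab
    simp only [addOne, Multiset.cons_inj_right] at this
    exact Nat.Partition.ext this
  · intro a _; simp
  · intro mu _ hmu
    rw [dif_neg, zero_mul]
    intro h
    apply hmu
    refine ⟨eraseOne mu h, by simp, ?_⟩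
    ext1
    simp [addOne, eraseOne, Multiset.cons_erase h]
  · intro lam _
    rw [dif_pos (hmem lam), her]

@[reducible]
noncomputable def seqMetric : PseudoMetricSpace (ℕ → ℝ) := PiCountable.pseudoMetricSpace

noncomputable def epsSeq (n : ℕ) : ℝ := ∑' i : ℕ, min ((1/2:ℝ)^i) (1 / ((n:ℝ)+1))

lemma epsSeq_tendsto : Tendsto epsSeq atTop (nhds 0) := by
  have : Tendsto epsSeq atTop (nhds (∑' i : ℕ, (0:ℝ))) := by
    refine tendsto_tsum_of_dominated_convergence (bound := fun i => (1/2:ℝ)^i)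
      summable_geometric_two ?_ ?_
    · intro i
      have := (tendsto_const_nhds (x := (1/2:ℝ)^i)).min
        (tendsto_one_div_add_atTop_nhds_zero_nat (𝕜 := ℝ))
      rwa [min_eq_right (by positivity)] at this
    · refine Eventually.of_forall fun n i => ?_
      rw [Real.norm_of_nonneg (by positivity)]
      exact min_le_left _ _
  simpa using this

lemma dist_le_eps (s t : ℕ → ℝ) (n : ℕ) (h : ∀ i, |s i - t i| ≤ 1 / ((n:ℝ)+1)) :
    seqMetric.dist s t ≤ epsSeq n := by
  have e : seqMetric.dist s t = ∑' i : ℕ, min ((1/2:ℝ)^i) (|s i - t i|) := by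
    have := PiCountable.dist_eq_tsum s t
    simp only [Real.dist_eq, Encodable.encode_nat] at this
    rw [one_div]
    exact this
  have sm : ∀ f : ℕ → ℝ, (∀ i, 0 ≤ f i) → Summable fun i : ℕ => min ((1/2:ℝ)^i) (f i) := by
    intro f hf
    exact Summable.of_nonneg_of_le (fun i => le_min (by positivity) (hf i))
      (fun i => min_le_left _ _) summable_geometric_two
  rw [e]
  refine Summable.tsum_le_tsum (fun i => min_le_min_left _ (h i)) (sm _ fun i => abs_nonneg _)
    (sm _ fun i => by positivity)

lemma slutskyS (ν : Measure ↥Sdown) (w : ↥Sdown → ℝ) (hw : Integrable w ν) 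
    {ι : ℕ → Type*} [∀ n, Fintype (ι n)] (a : ∀ n, ι n → ℝ) (ha : ∀ n i, 0 ≤ a n i)
    (x y : ∀ n, ι n → ↥Sdown)
    (hd : ∀ n, 1 ≤ n → ∀ j i, |(x n j).1 i - (y n j).1 i| ≤ 1 / ((n:ℝ)+1)) :
    (∀ f : ↥Sdown → ℝ, Continuous f → (∃ C, ∀ s, |f s| ≤ C) →
      Tendsto (fun n => ∑ i, a n i * f (x n i)) atTop (nhds (∫ s, w s * f s ∂ν))) →
    (∀ f : ↥Sdown → ℝ, Continuous f → (∃ C, ∀ s, |f s| ≤ C) →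
      Tendsto (fun n => ∑ i, a n i * f (y n i)) atTop (nhds (∫ s, w s * f s ∂ν))) := by
  intro H f hf hC
  letI m0 : PseudoMetricSpace (ℕ → ℝ) := seqMetric
  letI m : PseudoMetricSpace ↥Sdown := PseudoMetricSpace.induced Subtype.val seqMetric
  have ho : OpensMeasurableSpace ↥Sdown := inferInstance
  exact @slutsky ↥Sdown m _ ho ν w hw ι _ a ha x y epsSeq epsSeq_tendsto
    (fun n hn j => dist_le_eps _ _ n (hd n hn j)) H f hf hC

lemma r_tendsto (γ : ℝ) : Tendsto (fun n : ℕ => (((n:ℝ)+1)/n)^γ * ((n:ℝ)/(n+1))) atTop (nhds 1) := by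
  have h1 : Tendsto (fun n : ℕ => (n:ℝ)/(n+1)) atTop (nhds 1) := tendsto_natCast_div_add_atTop 1
  have h2 : Tendsto (fun n : ℕ => ((n:ℝ)+1)/n) atTop (nhds 1) := by
    have := h1.inv₀ one_ne_zero
    simpa using this
  have h3 := (h2.rpow_const (p := γ) (Or.inl one_ne_zero)).mul h1
  simpa using h3

lemma e_tendsto (γ : ℝ) (hγ1 : γ < 1) :
    Tendsto (fun n : ℕ => ((n:ℝ)+1)^γ * (1/((n:ℝ)+1))) atTop (nhds 0) := by
  have h := (tendsto_rpow_neg_atTop (y := 1 - γ) (by linarith)).comp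
    (tendsto_atTop_add_const_right atTop (1:ℝ) (tendsto_natCast_atTop_atTop (R := ℝ)))
  refine h.congr fun n => ?_
  have : (0:ℝ) < (n:ℝ)+1 := by positivity
  simp only [Function.comp]
  rw [neg_sub, Real.rpow_sub this, Real.rpow_one]
  ring

/-- let `0 < γ < 1`, `ν` a nonzero σ-finite measure on `𝒮↓` with
`∫(1−s₁)ν(ds) < ∞` and `ν({(1,0,…)}) = 0`; let `(pₙ)` be splitting probabilities with
`p₁((1)) = 1`, and let `qₙ` be obtained from `p_{n−1}` by appending a part `1`
(`qₙ(λ) = p_{n−1}(λ')` if `λ = (λ',1)`, and `qₙ(λ) = 0` if `λ` has no part equal to `1`).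
Then `(qₙ)` satisfies Hypothesis (H) with parameters `(γ,ν)` iff `(pₙ)` does. -/
theorem stmt8 (γ : ℝ) (hγ0 : 0 < γ) (hγ1 : γ < 1)
    (ν : Measure ↥Sdown) [SigmaFinite ν] (hν0 : ν ≠ 0)
    (hνint : Integrable (fun s : ↥Sdown => 1 - s.1 0) ν)
    (hνone : ν {⟨oneSeq, oneSeq_mem_Sdown⟩} = 0)
    (p : ∀ n, Nat.Partition n → ℝ)
    (hp0 : ∀ n lam, 0 ≤ p n lam)
    (hp1 : ∀ n, 1 ≤ n → ∑ lam : Nat.Partition n, p n lam = 1)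
    (hp11 : p 1 (Nat.Partition.indiscrete 1) = 1)
    (q : ∀ n, Nat.Partition n → ℝ)
    (hq : ∀ n, 1 ≤ n → ∀ mu : Nat.Partition (n + 1),
      q (n + 1) mu = if h : 1 ∈ mu.parts then p n (eraseOne mu h) else 0) :
    HypH q γ ν ↔ HypH p γ ν := by
  have key : ∀ f : ↥Sdown → ℝ, (∃ C, ∀ s, |f s| ≤ C) → ∀ L : ℝ,
      (Tendsto (fun n : ℕ => (n : ℝ) ^ γ * ∑ lam : Nat.Partition n,
        q n lam * (1 - partVec n lam 0) * f (toSdown (partVec n lam))) atTop (nhds L) ↔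
      Tendsto (fun n : ℕ => ∑ lam : Nat.Partition n,
        ((n : ℝ) ^ γ * (p n lam * (1 - partVec n lam 0))) *
          f (toSdown (partVec (n+1) (addOne lam)))) atTop (nhds L)) := by
    rintro f ⟨C, hC⟩ L
    rw [← tendsto_add_atTop_iff_nat 1]
    set B : ℕ → ℝ := fun n : ℕ => ∑ lam : Nat.Partition n,
        ((n : ℝ) ^ γ * (p n lam * (1 - partVec n lam 0))) *
          f (toSdown (partVec (n+1) (addOne lam))) with hB
    set r : ℕ → ℝ := fun n : ℕ => (((n:ℝ)+1)/n)^γ * ((n:ℝ)/(n+1)) with hr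
    set e : ℕ → ℝ := fun n : ℕ => ((n:ℝ)+1)^γ * (1/((n:ℝ)+1)) *
      ∑ lam : Nat.Partition n, p n lam * f (toSdown (partVec (n+1) (addOne lam))) with he
    have he0 : Tendsto e atTop (nhds 0) := by
      have h0 := (e_tendsto γ hγ1).mul_const C
      rw [zero_mul] at h0
      refine squeeze_zero_norm' ?_ h0
      filter_upwards [eventually_ge_atTop 1] with n hn
      rw [he, norm_mul, Real.norm_of_nonneg (by positivity)]
      gcongr
      calc ‖∑ lam : Nat.Partition n, p n lam * f (toSdown (partVec (n+1) (addOne lam)))‖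
          ≤ ∑ lam : Nat.Partition n, p n lam * C := by
            refine norm_sum_le_of_le _ fun lam _ => ?_
            rw [norm_mul, Real.norm_of_nonneg (hp0 n lam)]
            exact mul_le_mul_of_nonneg_left (hC _) (hp0 n lam)
        _ = C := by rw [← Finset.sum_mul, hp1 n hn, one_mul]
    have hr1 : Tendsto r atTop (nhds 1) := r_tendsto γ
    have heq : (fun n : ℕ => ((n + 1 : ℕ) : ℝ) ^ γ * ∑ lam : Nat.Partition (n+1),
        q (n+1) lam * (1 - partVec (n+1) lam 0) * f (toSdown (partVec (n+1) lam)))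
        =ᶠ[atTop] fun n => r n * B n + e n := by
      filter_upwards [eventually_ge_atTop 1] with n hn
      have hn0 : (0:ℝ) < n := by positivity
      simp only [hq n hn, mul_assoc]
      rw [sum_q (p n) (fun mu => (1 - partVec (n+1) mu 0) * f (toSdown (partVec (n+1) mu)))]
      simp only [hr, hB, he]
      rw [Finset.mul_sum, Finset.mul_sum, Finset.mul_sum, ← Finset.sum_add_distrib]
      refine Finset.sum_congr rfl fun lam _ => ?_
      rw [addOne_zero hn, Real.div_rpow (by positivity) (by positivity)]
      have : (0:ℝ) < (n:ℝ)^γ := by positivity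
      push_cast
      field_simp
      ring
    rw [tendsto_congr' heq]
    constructor
    · intro h
      have h2 := (h.sub he0).div hr1 one_ne_zero
      simp only [sub_zero, div_one] at h2
      refine h2.congr' ?_
      filter_upwards [eventually_ge_atTop 1] with n hn
      have hn0 : (0:ℝ) < n := by positivity
      have : r n ≠ 0 := by simp only [hr]; positivity
      simp only [Pi.div_apply, add_sub_cancel_right]
      field_simp
    · intro h
      simpa using (hr1.mul h).add he0
  have ha : ∀ n (lam : Nat.Partition n), 0 ≤ (n : ℝ) ^ γ * (p n lam * (1 - partVec n lam 0)) := by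
    intro n lam
    have h1 := hp0 n lam
    have h2 := sub_nonneg.2 (partVec_le_one n lam 0)
    positivity
  have hcl : ∀ n, 1 ≤ n → ∀ (lam : Nat.Partition n) i,
      |(toSdown (partVec n lam)).1 i - (toSdown (partVec (n+1) (addOne lam))).1 i|
        ≤ 1 / ((n:ℝ)+1) := by
    intro n hn lam i
    rw [toSdown_val hn, toSdown_val (by omega)]
    exact addOne_close hn lam i
  have hp' : HypH p γ ν ↔ ∀ f : ↥Sdown → ℝ, Continuous f → (∃ C, ∀ s, |f s| ≤ C) →
      Tendsto (fun n : ℕ => ∑ lam : Nat.Partition n,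
        ((n : ℝ) ^ γ * (p n lam * (1 - partVec n lam 0))) * f (toSdown (partVec n lam)))
      atTop (nhds (∫ s, (1 - s.1 0) * f s ∂ν)) := by
    unfold HypH
    simp only [Finset.mul_sum, mul_assoc]
  have hq' : HypH q γ ν ↔ ∀ f : ↥Sdown → ℝ, Continuous f → (∃ C, ∀ s, |f s| ≤ C) →
      Tendsto (fun n : ℕ => ∑ lam : Nat.Partition n,
        ((n : ℝ) ^ γ * (p n lam * (1 - partVec n lam 0))) *
          f (toSdown (partVec (n+1) (addOne lam))))
      atTop (nhds (∫ s, (1 - s.1 0) * f s ∂ν)) := by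
    unfold HypH
    refine forall_congr' fun f => forall_congr' fun hf => forall_congr' fun hC => ?_
    exact key f hC _
  rw [hp', hq']
  constructor
  · refine slutskyS ν _ hνint _ ha _ _ fun n hn lam i => ?_
    rw [abs_sub_comm]
    exact hcl n hn lam i
  · exact slutskyS ν _ hνint _ ha _ _ hcl
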